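/- arXiv:2411.16525 — 2 statements merged into one kernel-verified Lean document; each statement's English description precedes it below -/
import Mathlib

section
/- Let n ≥ 2 and a, b ∈ ℝ^n satisfy: a_i = b_i for all i ∈ [n−1]; a_n > b_n; and max_{i∈[n−1]} a_i − a_n > δ for some real δ ≥ ln n + 3. Then Boltz(b) − Boltz(a) > (a_n − b_n)(δ + a_n − b_n − ln n − 1) · e^{b_n} / ∑_{i=1}^n e^{b_i}. -/
/-- The softmax of a vector `z ∈ ℝⁿ`: `softmax(z)_i = exp(z_i) / ∑_j exp(z_j)`. -/
noncomputable def softmaxVec {n : ℕ} (z : Fin n → ℝ) : Fin n → ℝ :=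
  fun i => Real.exp (z i) / ∑ j, Real.exp (z j)

/-- The Boltzmann operator `Boltz(z) = ∑_i z_i · softmax(z)_i`. -/
noncomputable def boltz {n : ℕ} (z : Fin n → ℝ) : ℝ :=
  ∑ i, z i * softmaxVec z i

/-- The Gibbs inequality for exponential weights: the exponentially weighted mean of `f` is at least
the log-sum-exp of `f` minus the logarithm of the number of entries. -/
theorem sum_exp_mul_log_sub_le {ι : Type*} [Fintype ι] [Nonempty ι] (f : ι → ℝ) :
    (∑ i, Real.exp (f i)) * (Real.log (∑ i, Real.exp (f i)) - Real.log (Fintype.card ι)) ≤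
      ∑ i, f i * Real.exp (f i) := by
  set S := ∑ i, Real.exp (f i) with hS
  have hS0 : 0 < S := Finset.sum_pos (fun i _ => Real.exp_pos _) Finset.univ_nonempty
  have hk : (0 : ℝ) < Fintype.card ι := by exact_mod_cast Fintype.card_pos
  set c := Real.log S - Real.log (Fintype.card ι) with hc
  have hec : Real.exp c = S / Fintype.card ι := by
    rw [hc, Real.exp_sub, Real.exp_log hS0, Real.exp_log hk]
  have tangent : ∀ i, Real.exp (f i) - Real.exp c ≤ f i * Real.exp (f i) - Real.exp (f i) * c := by
    intro i
    have hexp : Real.exp c = Real.exp (f i) * Real.exp (c - f i) := by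
      rw [← Real.exp_add, add_sub_cancel]
    nlinarith [Real.add_one_le_exp (c - f i), Real.exp_pos (f i)]
  have hsum := Finset.sum_le_sum fun i (_ : i ∈ Finset.univ) => tangent i
  rw [Finset.sum_sub_distrib, Finset.sum_sub_distrib, ← Finset.sum_mul, ← hS, Finset.sum_const,
    Finset.card_univ, nsmul_eq_mul, hec, mul_div_cancel₀ _ hk.ne'] at hsum
  linarith

theorem boltz_eq_sum_div {n : ℕ} (z : Fin n → ℝ) :
    boltz z = (∑ i, z i * Real.exp (z i)) / ∑ i, Real.exp (z i) := by
  simp only [boltz, softmaxVec, Finset.sum_div, mul_div_assoc]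

/-- Two-point form of the Boltzmann gap: an entry moving from `x` down to `y` against a
group of total weight `S` and weighted mean `m`. -/
theorem weighted_mean_gap {S m x y n δ : ℝ} (hn : 1 < n) (hS : 0 < S) (hxy : y < x)
    (hδ : Real.log n + 3 ≤ δ) (hm : Real.log S - Real.log (n - 1) ≤ m)
    (hgap : δ < Real.log S - x) :
    (x - y) * (δ + x - y - Real.log n - 1) * (Real.exp y / (S + Real.exp y)) <
      (S * m + y * Real.exp y) / (S + Real.exp y) -
        (S * m + x * Real.exp x) / (S + Real.exp x) := by
  have hn0 : 0 < n := by linarith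
  obtain ⟨L, rfl⟩ : ∃ L, δ = L + Real.log n := ⟨δ - Real.log n, by ring⟩
  obtain ⟨d, rfl⟩ : ∃ d, x = y + d := ⟨x - y, by ring⟩
  have hL : 3 ≤ L := by linarith
  have hd : 0 < d := by linarith
  have hu : L + 1 / n < m - (y + d) := by
    have h := Real.log_le_sub_one_of_pos (show 0 < (n - 1) / n from div_pos (by linarith) hn0)
    rw [Real.log_div (by linarith) hn0.ne'] at h
    have : (n - 1) / n = 1 - 1 / n := by field_simp
    linarith
  obtain ⟨u, rfl⟩ : ∃ u, m = u + (y + d) := ⟨m - (y + d), by ring⟩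
  rw [add_sub_cancel_right] at hu
  have hE : Real.exp (y + d) * (L * n) < S := by
    have hlog : Real.exp (y + d) * (Real.exp L * n) < S := by
      rw [← Real.exp_log hn0, ← Real.exp_add, ← Real.exp_add, ← Real.lt_log_iff_exp_lt hS]
      linarith
    have := Real.add_one_le_exp L
    refine lt_of_le_of_lt ?_ hlog
    gcongr
    linarith
  have hEpos := Real.exp_pos (y + d)
  have hF := Real.exp_pos y
  set E := Real.exp (y + d) with hE_def
  set F := Real.exp y
  have hEF : F * (d + d ^ 2 / 2) ≤ E - F := by
    have := Real.quadratic_le_exp_of_nonneg hd.le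
    rw [hE_def, Real.exp_add]
    nlinarith
  have hinv : 0 < 1 / n := by positivity
  have hLE : L * E < S * (1 / n) := by
    rw [mul_one_div, lt_div_iff₀ hn0]; linarith
  have hmain : (L + d) * (S + E) < S * u * (1 + d / 2) := by
    have h1 : L * (S + E) < S * u := by nlinarith
    have h2 : S + E ≤ S * u / 2 := by nlinarith
    nlinarith
  have hkey : d * F * ((L + d) * (S + E)) < S * u * (E - F) := by
    have h1 := mul_lt_mul_of_pos_left hmain (mul_pos hd hF)
    have h2 := mul_le_mul_of_nonneg_left hEF (show 0 ≤ S * u by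
      exact mul_nonneg hS.le (by linarith))
    nlinarith
  rw [← mul_div_assoc, div_sub_div _ _ (by positivity) (by positivity),
    div_lt_div_iff₀ (by positivity) (by positivity)]
  have hSF : 0 < S + F := by positivity
  nlinarith [mul_lt_mul_of_pos_left hkey hSF]

/-- suppose `a` and `b` agree in the first `n−1` entries, `a_n > b_n`, and
`max_{i∈[n−1]} a_i − a_n > δ` with `δ ≥ ln n + 3`.  Then
`Boltz(b) − Boltz(a) > (a_n − b_n)(δ + a_n − b_n − ln n − 1) · e^{b_n} / ∑_i e^{b_i}`. -/
theorem boltz_sub_boltz_gt_of_lastEntry {n : ℕ} (hn : 2 ≤ n) (δ : ℝ)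
    (hδ : Real.log n + 3 ≤ δ) (a b : Fin n → ℝ)
    (hsame : ∀ i : Fin n, (i : ℕ) < n - 1 → a i = b i)
    (hlast : a ⟨n - 1, by omega⟩ > b ⟨n - 1, by omega⟩)
    (hgap : ∃ i : Fin n, (i : ℕ) < n - 1 ∧ (∀ j : Fin n, (j : ℕ) < n - 1 → a j ≤ a i) ∧
      a i - a ⟨n - 1, by omega⟩ > δ) :
    boltz b - boltz a >
      (a ⟨n - 1, by omega⟩ - b ⟨n - 1, by omega⟩) *
        (δ + a ⟨n - 1, by omega⟩ - b ⟨n - 1, by omega⟩ - Real.log n - 1) *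
        (Real.exp (b ⟨n - 1, by omega⟩) / ∑ i, Real.exp (b i)) := by
  obtain ⟨k, rfl⟩ : ∃ k, n = k + 1 := ⟨n - 1, by omega⟩
  have hk : 0 < k := by omega
  change (a (Fin.last k) - b (Fin.last k)) *
    (δ + a (Fin.last k) - b (Fin.last k) - Real.log (k + 1 : ℕ) - 1) *
      (Real.exp (b (Fin.last k)) / ∑ i, Real.exp (b i)) < boltz b - boltz a
  change b (Fin.last k) < a (Fin.last k) at hlast
  obtain ⟨i, hi, -, hgap⟩ := hgap
  change δ < a i - a (Fin.last k) at hgap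
  have hcast : ∀ j : Fin k, a j.castSucc = b j.castSucc := fun j =>
    hsame _ (by simp)
  have : Nonempty (Fin k) := ⟨⟨0, hk⟩⟩
  have hgibbs := sum_exp_mul_log_sub_le fun j : Fin k => b j.castSucc
  have hS : 0 < ∑ j : Fin k, Real.exp (b j.castSucc) :=
    Finset.sum_pos (fun j _ => Real.exp_pos _) Finset.univ_nonempty
  have hmax : a i ≤ Real.log (∑ j : Fin k, Real.exp (b j.castSucc)) := by
    rw [Real.le_log_iff_exp_le hS, hsame i hi]
    exact Finset.single_le_sum (f := fun j : Fin k => Real.exp (b j.castSucc))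
      (fun j _ => (Real.exp_pos _).le) (Finset.mem_univ (⟨i, hi⟩ : Fin k))
  simp only [boltz_eq_sum_div, Fin.sum_univ_castSucc, hcast]
  rw [Fintype.card_fin] at hgibbs
  set S := ∑ j : Fin k, Real.exp (b j.castSucc)
  set T := ∑ j : Fin k, b j.castSucc * Real.exp (b j.castSucc)
  rw [← mul_div_cancel₀ T hS.ne']
  have hk' : (0 : ℝ) < k := by exact_mod_cast hk
  push_cast at hδ ⊢
  refine weighted_mean_gap (by linarith) hS hlast hδ ?_ (by linarith)
  rw [add_sub_cancel_right, le_div_iff₀ hS]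
  linarith
end

section
/- Let 1 ≤ α < ∞, ε > 0, C > 0 and integers d, L ≥ 1. There exist an integer L_p ≥ 1 and a transformer τ ∈ 𝒯_A^{1,1,4} on sequences of length L_p+L (a composition of finitely many width-4 feed-forward layers, one single-head hidden-size-1 self-attention layer with residual connection, and finitely many width-4 feed-forward layers, applied after adding the positional encoding E with E_{i,j} = j−1) such that for every C-Lipschitz function f: [0,1]^{d×L} → [0,1]^{d×L} there exists a prompt P ∈ ℝ^{d×L_p} with d_α(τ([P, ·])_{:,L_p:}, f) ≤ ε. -/
/-- Columnwise softmax of a vector `a ∈ ℝ^L`. -/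
noncomputable def smax {L : ℕ} (a : Fin L → ℝ) : Fin L → ℝ :=
  fun i => Real.exp (a i) / ∑ j, Real.exp (a j)

/-- Matrix–vector product for matrices viewed as `Fin a → Fin b → ℝ`. -/
def mvec {a b : ℕ} (W : Fin a → Fin b → ℝ) (v : Fin b → ℝ) : Fin a → ℝ :=
  fun i => ∑ j, W i j * v j

/-- The `k`-th column of a `d × n` array. -/
def column {d n : ℕ} (Z : Fin d → Fin n → ℝ) (k : Fin n) : Fin d → ℝ :=
  fun i => Z i k

/-- Single-head self-attention with residual connection:
`f^{SA}(Z)_{:,k} = Z_{:,k} + W_O (W_V Z) softmax[(W_K Z)ᵀ (W_Q Z_{:,k})]`. -/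
noncomputable def saLayer {d s n : ℕ} (WO : Fin d → Fin s → ℝ)
    (WV WK WQ : Fin s → Fin d → ℝ) (Z : Fin d → Fin n → ℝ) : Fin d → Fin n → ℝ :=
  fun i k => Z i k +
    mvec WO (fun t => ∑ l,
      mvec WV (column Z l) t *
        smax (fun l' => ∑ t', mvec WK (column Z l') t' * mvec WQ (column Z k) t') l) i

/-- Tokenwise feed-forward layer with residual connection:
`f^{FF}(Z)_{:,k} = Z_{:,k} + W^{(2)} φ(W^{(1)} Z_{:,k} + b^{(1)}) + b^{(2)}`. -/
noncomputable def ffLayer {d n r : ℕ} (φ : ℝ → ℝ) (W1 : Fin r → Fin d → ℝ)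
    (W2 : Fin d → Fin r → ℝ) (b1 : Fin r → ℝ) (b2 : Fin d → ℝ)
    (Z : Fin d → Fin n → ℝ) : Fin d → Fin n → ℝ :=
  fun i k => Z i k + mvec W2 (fun j => φ (mvec W1 (column Z k) j + b1 j)) i + b2 i

/-- A piecewise-linear activation with at most three pieces, at least one constant. -/
def PL3 (φ : ℝ → ℝ) : Prop :=
  ∃ t₁ t₂ a₁ c₁ a₂ c₂ a₃ c₃ : ℝ, t₁ ≤ t₂ ∧ (a₁ = 0 ∨ a₂ = 0 ∨ a₃ = 0) ∧
    (∀ x, x < t₁ → φ x = a₁ * x + c₁) ∧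
    (∀ x, t₁ ≤ x → x < t₂ → φ x = a₂ * x + c₂) ∧
    (∀ x, t₂ ≤ x → φ x = a₃ * x + c₃)

/-- A width-4 feed-forward layer with admissible piecewise-linear activation. -/
def IsFF4 {d n : ℕ} (f : (Fin d → Fin n → ℝ) → Fin d → Fin n → ℝ) : Prop :=
  ∃ (φ : ℝ → ℝ) (W1 : Fin 4 → Fin d → ℝ) (W2 : Fin d → Fin 4 → ℝ)
    (b1 : Fin 4 → ℝ) (b2 : Fin d → ℝ),
      PL3 φ ∧ f = ffLayer φ W1 W2 b1 b2

/-- A single-head hidden-size-1 self-attention layer. -/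
def IsSA1 {d n : ℕ} (f : (Fin d → Fin n → ℝ) → Fin d → Fin n → ℝ) : Prop :=
  ∃ (WO : Fin d → Fin 1 → ℝ) (WV WK WQ : Fin 1 → Fin d → ℝ), f = saLayer WO WV WK WQ

/-- Adding the positional encoding `E` with `E_{i,j} = j − 1` (0-indexed: `E_{i,j} = j`). -/
def addPE {d n : ℕ} (Z : Fin d → Fin n → ℝ) : Fin d → Fin n → ℝ :=
  fun i j => Z i j + (j : ℝ)

/-- Composition of a list of layers. -/
def composeList {β : Type*} (l : List (β → β)) : β → β :=
  l.foldr (· ∘ ·) id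

/-- The transformer class `𝒯_A^{1,1,4}`: finitely many width-4 feed-forward layers, one
single-head hidden-size-1 self-attention layer, finitely many width-4 feed-forward
layers, applied after adding the positional encoding. -/
def InTA {d n : ℕ} (τ : (Fin d → Fin n → ℝ) → Fin d → Fin n → ℝ) : Prop :=
  ∃ (fs gs : List ((Fin d → Fin n → ℝ) → Fin d → Fin n → ℝ))
    (sa : (Fin d → Fin n → ℝ) → Fin d → Fin n → ℝ),
      (∀ f ∈ fs, IsFF4 f) ∧ (∀ g ∈ gs, IsFF4 g) ∧ IsSA1 sa ∧
      τ = fun Z => composeList fs (sa (composeList gs (addPE Z)))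

/-- The unit cube `[0,1]^{d×m}`. -/
def cube (d m : ℕ) : Set (Fin d → Fin m → ℝ) :=
  {X | ∀ i j, X i j ∈ Set.Icc (0 : ℝ) 1}

/-- Membership in the grid `G_{δ,m} = {0, δ, 2δ, …, 1−δ}^{d×m}`. -/
def inGrid {d m : ℕ} (δ : ℝ) (M : Fin d → Fin m → ℝ) : Prop :=
  ∀ i j, ∃ k : ℕ, M i j = (k : ℝ) * δ ∧ (k : ℝ) * δ ≤ 1 - δ

/-- Column concatenation `[P, X]` of `P ∈ ℝ^{d×L_p}` and `X ∈ ℝ^{d×L}`. -/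
def concat {d Lp L : ℕ} (P : Fin d → Fin Lp → ℝ) (X : Fin d → Fin L → ℝ) :
    Fin d → Fin (Lp + L) → ℝ :=
  fun i j =>
    if h : (j : ℕ) < Lp then P i ⟨j, h⟩
    else X i ⟨(j : ℕ) - Lp, by have := j.isLt; omega⟩

/-- The last `L` columns `M_{:,L_p:}` of `M ∈ ℝ^{d×(L_p+L)}`. -/
def lastCols {d : ℕ} (Lp L : ℕ) (M : Fin d → Fin (Lp + L) → ℝ) :
    Fin d → Fin L → ℝ :=
  fun i j => M i ⟨Lp + (j : ℕ), by have := j.isLt; omega⟩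


open MeasureTheory

/-- The entrywise `ℓ_α` norm of a `d × m` array: `(∑_{i,j} |M_{ij}|^α)^{1/α}`. -/
noncomputable def anorm {d m : ℕ} (α : ℝ) (M : Fin d → Fin m → ℝ) : ℝ :=
  (∑ i, ∑ j, |M i j| ^ α) ^ (1 / α)

lemma composeList_append {β : Type*} (l₁ l₂ : List (β → β)) :
    composeList (l₁ ++ l₂) = composeList l₁ ∘ composeList l₂ := by
  induction l₁ with
  | nil => rfl
  | cons f l ih => exact congrArg (f ∘ ·) ih

/-- The token map `F` is computed, columnwise, by a finite stack of width-4 layers. -/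
def FFRealizable (d n : ℕ) (F : (Fin d → ℝ) → Fin d → ℝ) : Prop :=
  ∃ gs : List ((Fin d → Fin n → ℝ) → Fin d → Fin n → ℝ),
    (∀ g ∈ gs, IsFF4 g) ∧ ∀ Z i k, composeList gs Z i k = F (column Z k) i

namespace FFRealizable

variable {d n : ℕ}

protected lemma id : FFRealizable d n id := ⟨[], by simp, fun _ _ _ => rfl⟩

lemma comp {F G : (Fin d → ℝ) → Fin d → ℝ} (hF : FFRealizable d n F)
    (hG : FFRealizable d n G) : FFRealizable d n (F ∘ G) := by
  obtain ⟨fs, hfs, hF⟩ := hF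
  obtain ⟨gs, hgs, hG⟩ := hG
  refine ⟨fs ++ gs, fun g hg => ?_, fun Z i k => ?_⟩
  · rcases List.mem_append.1 hg with h | h
    exacts [hfs g h, hgs g h]
  · rw [composeList_append, Function.comp_apply, hF]
    have : column (composeList gs Z) k = G (column Z k) := funext fun i => hG Z i k
    rw [this, Function.comp_apply]

lemma of_layer {φ : ℝ → ℝ} (hφ : PL3 φ) (W1 : Fin 4 → Fin d → ℝ) (W2 : Fin d → Fin 4 → ℝ)
    (b1 : Fin 4 → ℝ) (b2 : Fin d → ℝ) :
    FFRealizable d n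
      (fun z i => z i + mvec W2 (fun j => φ (mvec W1 z j + b1 j)) i + b2 i) :=
  ⟨[ffLayer φ W1 W2 b1 b2], by
    simpa using ⟨φ, W1, W2, b1, b2, hφ, rfl⟩, fun _ _ _ => rfl⟩

lemma translate (c : Fin d → ℝ) : FFRealizable d n (fun z => z + c) := by
  have hφ : PL3 (fun _ => 0) := ⟨0, 0, 0, 0, 0, 0, 0, 0, by simp⟩
  convert of_layer (n := n) hφ 0 0 0 c using 1
  ext z i
  simp [mvec]

lemma add_indicator (u v : Fin d → ℝ) (t : ℝ) :
    FFRealizable d n (fun z => z + if ∑ i, u i * z i = t then v else 0) := by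
  have hφ : PL3 (fun x => if 0 ≤ x then 1 else 0) := by
    refine ⟨0, 0, 0, 0, 0, 0, 0, 1, le_rfl, by simp, fun x hx => ?_, fun x h h' => ?_,
      fun x hx => ?_⟩
    · simp [hx]
    · linarith
    · simp [hx]
  convert of_layer (n := n) hφ ![u, -u, 0, 0] (fun i => ![v i, v i, 0, 0]) ![-t, t, 0, 0] (-v)
    using 1
  ext z i
  simp only [mvec, Fin.sum_univ_four, Pi.add_apply]
  simp
  rcases lt_trichotomy (∑ i, u i * z i) t with h | h | h
  · simp [h.ne, h.le, h.not_ge]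
  · simp [h]
    ring
  · simp [h.ne', h.le, h.not_ge]

lemma collapse_interval (i₀ : Fin d) {a b : ℝ} (hab : a ≤ b) :
    FFRealizable d n
      (fun z => Function.update z i₀ (if a ≤ z i₀ ∧ z i₀ < b then a else z i₀)) := by
  have hφ : PL3 (fun x => if a ≤ x ∧ x < b then a - x else 0) := by
    refine ⟨a, b, 0, 0, -1, a, 0, 0, hab, by simp, fun x hx => ?_, fun x h h' => ?_,
      fun x hx => ?_⟩
    · simp [hx.not_ge]
    · simp only [h, h', and_self, if_true]
      ring
    · simp [hx.not_gt]
  convert of_layer (n := n) hφ ![Pi.single i₀ 1, 0, 0, 0]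
    (fun i => ![Pi.single (M := fun _ => ℝ) i₀ 1 i, 0, 0, 0]) 0 0 using 1
  ext z i
  simp only [mvec, Fin.sum_univ_four]
  rcases eq_or_ne i i₀ with rfl | hi
  · simp [Pi.single_apply]
    split_ifs <;> simp
  · simp [hi]

/-- Rounds `x` down to a multiple of `1 / N` when `0 ≤ x < K / N`, and fixes it otherwise. -/
noncomputable def roundDown (N K : ℕ) (x : ℝ) : ℝ :=
  if 0 ≤ x ∧ x < K / N then (⌊N * x⌋₊ : ℝ) / N else x

lemma roundDown_succ {N : ℕ} (hN : 0 < N) (K : ℕ) (x : ℝ) :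
    roundDown N (K + 1) x =
      if (K : ℝ) / N ≤ roundDown N K x ∧ roundDown N K x < (K + 1 : ℝ) / N
      then (K : ℝ) / N else roundDown N K x := by
  have hN' : (0 : ℝ) < N := by exact_mod_cast hN
  have hK : (K : ℝ) / N < (K + 1 : ℝ) / N := by gcongr; linarith
  have hK0 : 0 ≤ (K : ℝ) / N := by positivity
  by_cases h : 0 ≤ x ∧ x < K / N
  · have e : roundDown N K x = (⌊N * x⌋₊ : ℝ) / N := if_pos h
    have h1 : (⌊N * x⌋₊ : ℝ) / N ≤ x := by
      rw [div_le_iff₀ hN', mul_comm]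
      exact Nat.floor_le (by have := h.1; positivity)
    rw [e, if_neg (by rintro ⟨h2, -⟩; linarith [h.2])]
    exact if_pos ⟨h.1, by push_cast; linarith [h.2]⟩
  · have e : roundDown N K x = x := if_neg h
    rw [e]
    unfold roundDown
    push_cast
    by_cases hx : (K : ℝ) / N ≤ x ∧ x < (K + 1 : ℝ) / N
    · rw [if_pos hx, if_pos ⟨hK0.trans hx.1, hx.2⟩]
      have : ⌊N * x⌋₊ = K := by
        rw [Nat.floor_eq_iff (by have := hK0.trans hx.1; positivity)]
        rw [div_le_iff₀ hN', lt_div_iff₀ hN'] at hx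
        constructor <;> linarith [hx.1, hx.2]
      rw [this]
    · rw [if_neg hx, if_neg]
      rintro ⟨h1, h2⟩
      rcases lt_or_ge x (K / N) with h3 | h3
      exacts [h ⟨h1, h3⟩, hx ⟨h3, h2⟩]

lemma update_roundDown (i₀ : Fin d) {N : ℕ} (hN : 0 < N) (K : ℕ) :
    FFRealizable d n (fun z => Function.update z i₀ (roundDown N K (z i₀))) := by
  induction K with
  | zero =>
    convert FFRealizable.id (d := d) (n := n) using 1
    ext z i
    have : roundDown N 0 (z i₀) = z i₀ := if_neg (by simp)
    simp [this]
  | succ K ih =>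
    have hK : (K : ℝ) / N ≤ (K + 1 : ℝ) / N := by gcongr; linarith
    convert (collapse_interval (n := n) i₀ hK).comp ih using 1
    ext z i
    simp [roundDown_succ hN]

lemma map_roundDown {N : ℕ} (hN : 0 < N) (K : ℕ) :
    FFRealizable d n (fun z i => roundDown N K (z i)) := by
  classical
  suffices H : ∀ A : Finset (Fin d),
      FFRealizable d n (fun z i => if i ∈ A then roundDown N K (z i) else z i) by
    simpa using H Finset.univ
  intro A
  induction A using Finset.induction_on with
  | empty =>
    simp only [Finset.notMem_empty, if_false]
    exact FFRealizable.id
  | insert a A ha ih =>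
    convert (update_roundDown (n := n) a hN K).comp ih using 1
    ext z i
    rcases eq_or_ne i a with rfl | hi
    · simp [ha]
    · simp [hi]

lemma lookup_of_separated {ι : Type*} (u : Fin d → ℝ) (s y : ι → Fin d → ℝ)
    (hs : ∀ a b, ∑ i, u i * s a i = ∑ i, u i * s b i → a = b)
    (hy : ∀ a b, ∑ i, u i * y a i ≠ ∑ i, u i * s b i) (A : Finset ι) :
    ∃ F, FFRealizable d n F ∧ (∀ a ∈ A, F (s a) = y a) ∧
      ∀ z, (∀ a ∈ A, ∑ i, u i * z i ≠ ∑ i, u i * s a i) → F z = z := by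
  classical
  induction A using Finset.induction_on with
  | empty => exact ⟨id, FFRealizable.id, by simp, by simp⟩
  | insert a A ha ih =>
    obtain ⟨F, hF, h1, h2⟩ := ih
    refine ⟨_, hF.comp (add_indicator u (y a - s a) (∑ i, u i * s a i)), ?_, ?_⟩
    · intro b hb
      rcases eq_or_ne b a with rfl | hne
      · simpa using h2 (y b) fun c _ => hy b c
      · have : ∑ i, u i * s b i ≠ ∑ i, u i * s a i := fun h => hne (hs _ _ h)
        simpa [this] using h1 b (Finset.mem_of_mem_insert_of_ne hb hne)
    · intro z hz
      have := hz a (Finset.mem_insert_self a A)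
      simpa [this] using h2 z fun c hc => hz c (Finset.mem_insert_of_mem hc)

/-- Stacks of width-4 layers realize every finite table of token values. -/
lemma lookup (hd : 1 ≤ d) {ι : Type*} [Finite ι] (s y : ι → Fin d → ℝ)
    (hs : Function.Injective s) : ∃ F, FFRealizable d n F ∧ ∀ a, F (s a) = y a := by
  have := Fintype.ofFinite ι
  let v : Option {p : ι × ι // p.1 ≠ p.2} → Fin d → ℝ
    | none => fun _ => 1
    | some p => s p.1.1 - s p.1.2
  have hv : ∀ o, v o ≠ 0 := by
    rintro (_ | ⟨⟨a, b⟩, hab⟩)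
    · intro h
      exact one_ne_zero (congrFun h ⟨0, hd⟩)
    · exact sub_ne_zero.2 fun h => hab (hs h)
  obtain ⟨f, hf⟩ := Module.exists_dual_forall_apply_ne_zero (K := ℝ) v hv
  let u : Fin d → ℝ := fun i => f (Pi.single i 1)
  have hu : ∀ z, ∑ i, u i * z i = f z := fun z => by
    rw [LinearMap.pi_apply_eq_sum_univ f z]
    exact Finset.sum_congr rfl fun i _ => by
      rw [smul_eq_mul, mul_comm]
      congr 1
      change f (Pi.single i 1) = _
      congr 1
      ext j
      simp [Pi.single_apply, eq_comm]
  have h1 : f (v none) ≠ 0 := hf none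
  obtain ⟨t, ht⟩ := Infinite.exists_notMem_finset
    (Finset.univ.image fun p : ι × ι => (f (y p.1) - f (s p.2)) / f (v none))
  obtain ⟨F, hF, hFs, -⟩ := lookup_of_separated (n := n) u (fun a => s a + t • v none) y
    (fun a b h => by
      by_contra hab
      refine hf (some ⟨(a, b), hab⟩) ?_
      simp only [hu, map_add] at h
      simp only [v, map_sub]
      linarith)
    (fun a b h => by
      refine ht (Finset.mem_image.2 ⟨(a, b), Finset.mem_univ _, ?_⟩)
      simp only [hu, map_add, map_smul, smul_eq_mul] at h
      rw [div_eq_iff h1]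
      linarith) Finset.univ
  exact ⟨_, hF.comp (translate (t • v none)), fun a => hFs a (Finset.mem_univ a)⟩

end FFRealizable

lemma exists_isSA1_add_sum {d n : ℕ} (i₀ : Fin d) (hn : 0 < n) (M : ℝ) :
    ∃ sa : (Fin d → Fin n → ℝ) → Fin d → Fin n → ℝ,
      IsSA1 sa ∧ ∀ Z i k, sa Z i k = Z i k + M * ∑ l, Z i₀ l := by
  refine ⟨_, ⟨fun _ _ => M * n, fun _ => Pi.single i₀ 1, 0, 0, rfl⟩, fun Z i k => ?_⟩
  have hn' : (n : ℝ) ≠ 0 := by exact_mod_cast hn.ne'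
  simp [saLayer, mvec, smax, column, Pi.single_apply, ← Finset.sum_mul]
  field_simp

lemma injective_context_code {Ω ι κ : Type*} [Fintype ι] {c : κ → ℕ}
    (hc : Function.Injective c) {B : ℕ} (hB : ∀ a, c a < B) {K : Ω → ι → κ}
    (hK : ∀ ω, Function.Injective (K ω))
    (hrange : ∀ ω ω', Set.range (K ω) = Set.range (K ω') → ω = ω') :
    Function.Injective fun p : Ω × ι =>
      2 ^ c (K p.1 p.2) + 2 ^ B * ∑ l, 2 ^ c (K p.1 l) := by
  classical
  rintro ⟨ω, k⟩ ⟨ω', k'⟩ h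
  have hlt : ∀ a, 2 ^ c a < 2 ^ B := fun a => Nat.pow_lt_pow_right one_lt_two (hB a)
  have h1 : 2 ^ c (K ω k) = 2 ^ c (K ω' k') := by
    have := congrArg (· % 2 ^ B) h
    simpa [Nat.add_mul_mod_self_left, Nat.mod_eq_of_lt (hlt _)] using this
  have h2 : ∑ l, 2 ^ c (K ω l) = ∑ l, 2 ^ c (K ω' l) := by
    simp only [h1] at h
    exact Nat.eq_of_mul_eq_mul_left (by positivity) (Nat.add_left_cancel h)
  have hsum : ∀ ω, ∑ l, 2 ^ c (K ω l) = ∑ a ∈ Finset.univ.image (c ∘ K ω), 2 ^ a :=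
    fun ω => by rw [Finset.sum_image (fun a _ b _ hab => (hc.comp (hK ω)) hab)]; rfl
  rw [hsum, hsum] at h2
  have h3 := congrArg (fun s : Finset ℕ => (s : Set ℕ)) (Finset.geomSum_injective le_rfl h2)
  simp only [Finset.coe_image, Finset.coe_univ, Set.image_univ, Set.range_comp] at h3
  obtain rfl := hrange ω ω' (hc.image_injective h3)
  rw [hK ω (hc (Nat.pow_right_injective le_rfl h1))]

/-- The quantized tokens: a prompt token, or a column of a grid input with its position. -/
noncomputable def gridToken {d L N m : ℕ} :
    Fin m ⊕ (Fin L × (Fin d → Fin N)) → Fin d → ℝ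
  | .inl t => fun _ => -((t : ℝ) + 1)
  | .inr (j, v) => fun i => (v i : ℝ) / N + (j + 1)

lemma gridToken_injective {d L N m : ℕ} (hd : 1 ≤ d) (hN : 0 < N) :
    Function.Injective (gridToken (d := d) (L := L) (N := N) (m := m)) := by
  have hN' : (0 : ℝ) < N := by exact_mod_cast hN
  rintro (t | ⟨j, v⟩) (t' | ⟨j', v'⟩) h
  · have := congrFun h ⟨0, hd⟩
    simp only [gridToken, neg_inj, add_left_inj, Nat.cast_inj] at this
    rw [Fin.ext this]
  · have := congrFun h ⟨0, hd⟩
    simp only [gridToken] at this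
    have h0 : (0 : ℝ) ≤ (v' ⟨0, hd⟩ : ℝ) / N := by positivity
    have h1 : (0 : ℝ) ≤ (t : ℝ) := by positivity
    have h2 : (0 : ℝ) ≤ (j' : ℝ) := by positivity
    linarith
  · have := congrFun h ⟨0, hd⟩
    simp only [gridToken] at this
    have h0 : (0 : ℝ) ≤ (v ⟨0, hd⟩ : ℝ) / N := by positivity
    have h1 : (0 : ℝ) ≤ (t' : ℝ) := by positivity
    have h2 : (0 : ℝ) ≤ (j : ℝ) := by positivity
    linarith
  · have key : ∀ i, (v i : ℕ) + N * (j + 1) = v' i + N * (j' + 1) := fun i => by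
      have := congrFun h i
      simp only [gridToken] at this
      field_simp at this
      exact_mod_cast this
    have hj : j = j' := by
      have := congrArg (· / N) (key ⟨0, hd⟩)
      simp only [Nat.add_mul_div_left _ _ hN, Nat.div_eq_of_lt (Fin.is_lt _)] at this
      exact Fin.ext (by omega)
    subst hj
    have hv : v = v' := funext fun i => Fin.ext (Nat.add_right_cancel (key i))
    rw [hv]

lemma roundDown_neg {N K : ℕ} {x : ℝ} (hx : x < 0) : FFRealizable.roundDown N K x = x :=
  if_neg fun h => by linarith [h.1]

lemma roundDown_add_natCast {N L j : ℕ} (hN : 0 < N) (hj : j < L) {x : ℝ} (hx0 : 0 ≤ x)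
    (hx1 : x < 1) :
    FFRealizable.roundDown N (N * (L + 1)) (x + (j + 1)) =
      (⌊N * x⌋₊ : ℝ) / N + (j + 1) := by
  have hN' : (0 : ℝ) < N := by exact_mod_cast hN
  have hj' : (j : ℝ) + 1 ≤ L := by exact_mod_cast hj
  have e : (N : ℝ) * (x + (j + 1)) = N * x + (N * (j + 1) : ℕ) := by push_cast; ring
  unfold FFRealizable.roundDown
  rw [if_pos, e, Nat.floor_add_natCast (by positivity)]
  · push_cast
    field_simp
  · refine ⟨by positivity, ?_⟩
    push_cast
    rw [mul_div_cancel_left₀ _ hN'.ne']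
    linarith

/-- A single transformer evaluates any of `m` tables of values on grid inputs, the table being
selected by a prompt of length one. -/
lemma exists_transformer_eval_table {d L N : ℕ} (hd : 1 ≤ d) (hN : 0 < N) {m : ℕ}
    (T : Fin m → (Fin L → Fin d → Fin N) → Fin d → Fin L → ℝ) :
    ∃ τ : (Fin d → Fin (1 + L) → ℝ) → Fin d → Fin (1 + L) → ℝ, InTA τ ∧
      ∀ (t : Fin m) (X : Fin d → Fin L → ℝ) (g : Fin L → Fin d → Fin N),
        (∀ i j, 0 ≤ X i j ∧ X i j < 1) → (∀ i j, ⌊N * X i j⌋₊ = g j i) →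
        lastCols 1 L (τ (concat (fun _ _ => -((t : ℝ) + 1)) X)) = T t g := by
  let c : Fin m ⊕ (Fin L × (Fin d → Fin N)) → ℕ := fun a => Fintype.equivFin _ a
  have hc : Function.Injective c := Fin.val_injective.comp (Fintype.equivFin _).injective
  let B := Fintype.card (Fin m ⊕ (Fin L × (Fin d → Fin N)))
  have hB : ∀ a, c a < B := fun a => Fin.is_lt _
  let K : Fin m × (Fin L → Fin d → Fin N) → Fin (1 + L) → Fin m ⊕ (Fin L × (Fin d → Fin N)) :=
    fun ω => Fin.addCases (fun _ => .inl ω.1) (fun j => .inr (j, ω.2 j))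
  have hK0 : ∀ ω i, K ω (Fin.castAdd L i) = .inl ω.1 := fun ω i => Fin.addCases_left _
  have hK1 : ∀ ω j, K ω (Fin.natAdd 1 j) = .inr (j, ω.2 j) := fun ω j => Fin.addCases_right _
  have hK : ∀ ω, Function.Injective (K ω) := by
    intro ω a b
    induction a using Fin.addCases with
    | left a =>
      induction b using Fin.addCases with
      | left b => intro _; rw [Subsingleton.elim a b]
      | right b => simp [hK0, hK1]
    | right a =>
      induction b using Fin.addCases with
      | left b => simp [hK0, hK1]
      | right b =>
        simp only [hK1, Sum.inr.injEq, Prod.mk.injEq, and_imp]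
        rintro rfl -
        rfl
  have hrange : ∀ ω ω', Set.range (K ω) = Set.range (K ω') → ω = ω' := by
    intro ω ω' h
    have h1 : ω.1 = ω'.1 := by
      obtain ⟨l, hl⟩ : K ω (Fin.castAdd L 0) ∈ Set.range (K ω') := h ▸ Set.mem_range_self _
      induction l using Fin.addCases with
      | left l => simpa [hK0] using hl.symm
      | right l => simp [hK0, hK1] at hl
    have h2 : ω.2 = ω'.2 := by
      funext j
      obtain ⟨l, hl⟩ : K ω (Fin.natAdd 1 j) ∈ Set.range (K ω') := h ▸ Set.mem_range_self _
      induction l using Fin.addCases with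
      | left l => simp [hK0, hK1] at hl
      | right l =>
        simp only [hK1, Sum.inr.injEq, Prod.mk.injEq] at hl
        obtain ⟨rfl, hl⟩ := hl
        exact hl.symm
    exact Prod.ext h1 h2
  have hcode := injective_context_code hc hB hK hrange
  let i₀ : Fin d := ⟨0, hd⟩
  obtain ⟨F₁, hF₁, hF₁s⟩ := FFRealizable.lookup (n := 1 + L) hd
    (gridToken (d := d) (L := L) (N := N) (m := m)) (fun a _ => (2 : ℝ) ^ c a)
    (gridToken_injective hd hN)
  obtain ⟨F₂, hF₂, hF₂s⟩ := FFRealizable.lookup (n := 1 + L) hd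
    (fun (p : (Fin m × (Fin L → Fin d → Fin N)) × Fin (1 + L)) (_ : Fin d) =>
      ((2 ^ c (K p.1 p.2) + 2 ^ B * ∑ l, 2 ^ c (K p.1 l) : ℕ) : ℝ))
    (fun p i => Fin.addCases (fun _ => 0) (fun j => T p.1.1 p.1.2 i j) p.2)
    (fun p q h => hcode (Nat.cast_injective (congrFun h i₀)))
  obtain ⟨sa, hsa, hsas⟩ := exists_isSA1_add_sum (n := 1 + L) i₀ (by omega) (2 ^ B : ℝ)
  obtain ⟨gs, hgs, hgsF⟩ := hF₁.comp (FFRealizable.map_roundDown hN (N * (L + 1)))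
  obtain ⟨fs, hfs, hfsF⟩ := hF₂
  refine ⟨_, ⟨fs, gs, sa, hfs, hgs, hsa, rfl⟩, fun t X g hX hg => ?_⟩
  set Z := addPE (concat (fun _ _ => -((t : ℝ) + 1)) X : Fin d → Fin (1 + L) → ℝ) with hZ
  have hround : ∀ l, (fun i => FFRealizable.roundDown N (N * (L + 1)) (column Z l i)) =
      gridToken (K (t, g) l) := by
    intro l
    funext i
    induction l using Fin.addCases with
    | left l =>
      rw [hK0]
      have : column Z (Fin.castAdd L l) i = -((t : ℝ) + 1) := by
        simp [hZ, column, addPE, concat]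
      rw [this, roundDown_neg (by have : (0 : ℝ) ≤ (t : ℝ) := by positivity
                                  linarith)]
      rfl
    | right l =>
      rw [hK1]
      have : column Z (Fin.natAdd 1 l) i = X i l + (l + 1) := by
        simp [hZ, column, addPE, concat, add_comm]
      rw [this, roundDown_add_natCast hN l.is_lt (hX i l).1 (hX i l).2, hg]
      rfl
  have hpre : ∀ i l, composeList gs Z i l = 2 ^ c (K (t, g) l) := fun i l => by
    rw [hgsF, Function.comp_apply, hround, hF₁s]
  have hctx : ∀ l, column (sa (composeList gs Z)) l = fun _ =>
      ((2 ^ c (K (t, g) l) + 2 ^ B * ∑ l, 2 ^ c (K (t, g) l) : ℕ) : ℝ) := fun l => by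
    funext i
    simp [column, hsas, hpre]
  funext i j
  change composeList fs (sa (composeList gs Z)) i (Fin.natAdd 1 j) = T t g i j
  rw [hfsF, hctx, hF₂s ((t, g), Fin.natAdd 1 j)]
  exact Fin.addCases_right _

section anorm

variable {d m : ℕ} {α : ℝ}

lemma anorm_nonneg (M : Fin d → Fin m → ℝ) : 0 ≤ anorm α M := by
  unfold anorm
  positivity

lemma abs_entry_le_anorm (hα : 0 < α) (M : Fin d → Fin m → ℝ) (i : Fin d) (j : Fin m) :
    |M i j| ≤ anorm α M := by
  have h : |M i j| ^ α ≤ ∑ i, ∑ j, |M i j| ^ α :=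
    (Finset.single_le_sum (f := fun j => |M i j| ^ α) (fun j _ => by positivity)
      (Finset.mem_univ j)).trans
    (Finset.single_le_sum (f := fun i => ∑ j, |M i j| ^ α) (fun i _ => by positivity)
      (Finset.mem_univ i))
  calc |M i j| = (|M i j| ^ α) ^ (1 / α) := by
        rw [← Real.rpow_mul (abs_nonneg _), mul_one_div_cancel hα.ne', Real.rpow_one]
    _ ≤ anorm α M := Real.rpow_le_rpow (by positivity) h (by positivity)

lemma anorm_le_of_forall_abs_le (hα : 0 < α) {M : Fin d → Fin m → ℝ} {η : ℝ} (hη : 0 ≤ η)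
    (h : ∀ i j, |M i j| ≤ η) : anorm α M ≤ ((d * m : ℕ) : ℝ) ^ (1 / α) * η := by
  have hs : ∑ i, ∑ j, |M i j| ^ α ≤ ((d * m : ℕ) : ℝ) * η ^ α := by
    calc ∑ i, ∑ j, |M i j| ^ α ≤ ∑ _i : Fin d, ∑ _j : Fin m, η ^ α := by
          gcongr with i _ j _
          exact h i j
      _ = ((d * m : ℕ) : ℝ) * η ^ α := by simp [mul_assoc]
  calc anorm α M ≤ (((d * m : ℕ) : ℝ) * η ^ α) ^ (1 / α) :=
        Real.rpow_le_rpow (by positivity) hs (by positivity)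
    _ = ((d * m : ℕ) : ℝ) ^ (1 / α) * η := by
        rw [Real.mul_rpow (by positivity) (by positivity), ← Real.rpow_mul hη,
          mul_one_div_cancel hα.ne', Real.rpow_one]

end anorm

lemma volume_cube (d m : ℕ) : volume (cube d m) = 1 := by
  have : cube d m = Set.univ.pi fun _ : Fin d => Set.univ.pi fun _ : Fin m => Set.Icc 0 1 := by
    ext X
    simp only [cube, Set.mem_ofPred_eq, Set.mem_univ_pi]
  rw [this]
  simp only [volume_pi_pi, Real.volume_Icc]
  simp

lemma ae_forall_entry_lt_one (d m : ℕ) :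
    ∀ᵐ X : Fin d → Fin m → ℝ, X ∈ cube d m → ∀ i j, 0 ≤ X i j ∧ X i j < 1 := by
  have h : ∀ᵐ X : Fin d → Fin m → ℝ, ∀ i j, X i j ≠ 1 := by
    refine ae_all_iff.2 fun i => ae_all_iff.2 fun j => ?_
    have h1 : ∀ᵐ v : Fin m → ℝ, v j ≠ 1 :=
      Measure.ae_eval_ne (μ := fun _ : Fin m => (volume : Measure ℝ)) j 1
    exact (Measure.tendsto_eval_ae_ae
      (μ := fun _ : Fin d => (volume : Measure (Fin m → ℝ))) (i := i)).eventually h1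
  filter_upwards [h] with X hX hc i j
  exact ⟨(hc i j).1, lt_of_le_of_ne (hc i j).2 (hX i j)⟩

lemma abs_floor_mul_div_sub_le {N : ℕ} (hN : 0 < N) {x : ℝ} (hx : 0 ≤ x) :
    |(⌊N * x⌋₊ : ℝ) / N - x| ≤ 1 / N := by
  have hN' : (0 : ℝ) < N := by exact_mod_cast hN
  have h1 : (⌊N * x⌋₊ : ℝ) ≤ N * x := Nat.floor_le (by positivity)
  have h2 : N * x < ⌊N * x⌋₊ + 1 := Nat.lt_floor_add_one _
  have e : (⌊N * x⌋₊ : ℝ) / N - x = (⌊N * x⌋₊ - N * x) / N := by field_simp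
  rw [e, abs_div, abs_of_pos hN']
  gcongr
  rw [abs_le]
  constructor <;> linarith

lemma setIntegral_cube_anorm_rpow_le {d m : ℕ} {α δ : ℝ} (hα : 0 < α) (hδ : 0 ≤ δ)
    {F : (Fin d → Fin m → ℝ) → Fin d → Fin m → ℝ}
    (h : ∀ X, (∀ i j, 0 ≤ X i j ∧ X i j < 1) → anorm α (F X) ≤ δ) :
    (∫ X in cube d m, anorm α (F X) ^ α) ^ (1 / α) ≤ δ := by
  have h1 : ∫ X in cube d m, anorm α (F X) ^ α ≤ δ ^ α := by
    have := norm_setIntegral_le_of_norm_le_const_ae' (μ := volume) (s := cube d m)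
      (f := fun X => anorm α (F X) ^ α) (C := δ ^ α) (by simp [volume_cube]) (by
        filter_upwards [ae_forall_entry_lt_one d m] with X hX hc
        rw [Real.norm_of_nonneg (Real.rpow_nonneg (anorm_nonneg _) _)]
        exact Real.rpow_le_rpow (anorm_nonneg _) (h X (hX hc)) hα.le)
    rw [Measure.real, volume_cube, ENNReal.toReal_one, mul_one] at this
    exact (le_abs_self _).trans this
  calc _ ≤ (δ ^ α) ^ (1 / α) := Real.rpow_le_rpow
        (integral_nonneg fun X => Real.rpow_nonneg (anorm_nonneg _) _) h1 (by positivity)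
    _ = δ := by rw [← Real.rpow_mul hδ, mul_one_div_cancel hα.ne', Real.rpow_one]

/-- universality of prompt tuning for `𝒯_A^{1,1,4}` transformers.  There
exist a prompt length `L_p ≥ 1` and a transformer `τ ∈ 𝒯_A^{1,1,4}` on sequences of
length `L_p + L` such that every `C`-Lipschitz `f : [0,1]^{d×L} → [0,1]^{d×L}` is
`ε`-approximated in `d_α` by `τ([P, ·])_{:,L_p:}` for some prompt `P ∈ ℝ^{d×L_p}`. -/
theorem prompt_tuning_universality_TA (d L : ℕ) (hd : 1 ≤ d) (hL : 1 ≤ L)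
    (α C ε : ℝ) (hα : 1 ≤ α) (hC : 0 < C) (hε : 0 < ε) :
    ∃ Lp : ℕ, 1 ≤ Lp ∧
      ∃ τ : (Fin d → Fin (Lp + L) → ℝ) → Fin d → Fin (Lp + L) → ℝ,
        InTA τ ∧
        ∀ f : (Fin d → Fin L → ℝ) → Fin d → Fin L → ℝ,
          (∀ X ∈ cube d L, f X ∈ cube d L) →
          (∀ X ∈ cube d L, ∀ Y ∈ cube d L, anorm α (f X - f Y) ≤ C * anorm α (X - Y)) →
          ∃ P : Fin d → Fin Lp → ℝ,
            (∫ X in cube d L,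
                anorm α (lastCols Lp L (τ (concat P X)) - f X) ^ α) ^ (1 / α) ≤ ε := by

  have hα0 : 0 < α := by linarith
  set κ : ℝ := ((d * L : ℕ) : ℝ) ^ (1 / α) with hκ
  have hκ0 : 0 < κ := Real.rpow_pos_of_pos (by exact_mod_cast Nat.mul_pos hd hL) _
  obtain ⟨N, hNε⟩ := exists_nat_gt (κ * (1 + C * κ) / ε)
  have hN' : (0 : ℝ) < N := lt_of_le_of_lt (by positivity) hNε
  have hN : 0 < N := by exact_mod_cast hN'
  let e := Fintype.equivFin ((Fin L → Fin d → Fin N) → Fin d → Fin L → Fin (N + 1))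
  obtain ⟨τ, hτ, hτT⟩ := exists_transformer_eval_table hd hN
    (fun t g i j => (e.symm t g i j : ℝ) / N)
  refine ⟨1, le_rfl, τ, hτ, fun f hf hLip => ?_⟩
  let grid : (Fin L → Fin d → Fin N) → Fin d → Fin L → ℝ := fun g i j => (g j i : ℝ) / N
  have hgrid : ∀ g, grid g ∈ cube d L := fun g i j =>
    ⟨by positivity, (div_le_one hN').2 (by exact_mod_cast (g j i).is_lt.le)⟩
  let tab : (Fin L → Fin d → Fin N) → Fin d → Fin L → Fin (N + 1) := fun g i j =>
    ⟨⌊N * f (grid g) i j⌋₊, Nat.lt_succ_of_le (Nat.floor_le_of_le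
      (mul_le_of_le_one_right hN'.le (hf _ (hgrid g) i j).2))⟩
  refine ⟨fun _ _ => -((e tab : ℕ) + 1), setIntegral_cube_anorm_rpow_le hα0 hε.le fun X hX => ?_⟩
  let g : Fin L → Fin d → Fin N := fun j i => ⟨⌊N * X i j⌋₊,
    (Nat.floor_lt (mul_nonneg hN'.le (hX i j).1)).2 (mul_lt_of_lt_one_right hN' (hX i j).2)⟩
  rw [hτT (e tab) X g hX fun _ _ => rfl]
  have hXc : X ∈ cube d L := fun i j => ⟨(hX i j).1, (hX i j).2.le⟩
  have hquant : anorm α (grid g - X) ≤ κ * (1 / N) :=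
    anorm_le_of_forall_abs_le hα0 (by positivity) fun i j =>
      abs_floor_mul_div_sub_le hN (hX i j).1
  have hentry : ∀ i j, |(tab g i j : ℝ) / N - f X i j| ≤ (1 + C * κ) / N := fun i j => by
    have h1 : |(tab g i j : ℝ) / N - f (grid g) i j| ≤ 1 / N :=
      abs_floor_mul_div_sub_le hN (hf _ (hgrid g) i j).1
    have h2 : |f (grid g) i j - f X i j| ≤ C * (κ * (1 / N)) :=
      (abs_entry_le_anorm hα0 (f (grid g) - f X) i j).trans
        ((hLip _ (hgrid g) _ hXc).trans (by gcongr))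
    calc _ ≤ _ := abs_sub_le _ (f (grid g) i j) _
      _ ≤ 1 / N + C * (κ * (1 / N)) := add_le_add h1 h2
      _ = _ := by ring
  refine (anorm_le_of_forall_abs_le hα0 (η := (1 + C * κ) / N) (by positivity)
    fun i j => ?_).trans ?_
  · simpa using hentry i j
  · rw [← mul_div_assoc, div_le_iff₀ hN', mul_comm ε]
    exact ((div_lt_iff₀ hε).1 hNε).le
end
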